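/- Let c > 0 and α ≥ 0 be real numbers, and let μ_n^{(α)}(c) denote the (n+1)-th singular value (eigenvalue in modulus, in decreasing order) of the weighted finite Fourier transform operator F_c^{(α)} f(x) = ∫_{-1}^{1} e^{icxy} f(y)(1-y²)^α dy on L²([-1,1],(1-y²)^α dy). Then for every integer n > (ec+1)/2, |μ_n^{(α)}(c)| ≤ (k_α / (c^{α/2+1} log((2n-1)/(ec)))) · (ec/(2n-1))^{n+α/2}, where k_α = (2/e)^{1+α/2} · π · √Γ(α+1). -/

import Mathlib

open Real MeasureTheory intervalIntegral

/-!
The kernel `exp (i c x y)` of the operator is close to one of rank `n`: interpolating it in `x` at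
the `n` Chebyshev nodes leaves an error of at most `2 (c |y| / 2) ^ n / n!` on `[-1, 1]`. Hence
`‖F f‖ ≤ C ‖f‖` whenever `F f` vanishes at these `n` nodes, with `C` obtained from the error by the
Cauchy–Schwarz inequality. These `n` linear conditions have a nonzero solution in the span of
`n + 1` orthonormal eigenvectors, on which `F` expands norms by at least `|μ n|`, so `|μ n| ≤ C`.
The substitution `y = exp (-s)` turns the `2 n`-th moment of the weight `(1 - y ^ 2) ^ α` occurring
in `C` into a Gamma integral, and Stirling's formula gives the stated rate.
-/

theorem iteratedDeriv_polynomial_eval {𝕜 : Type*} [NontriviallyNormedField 𝕜]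
    (P : Polynomial 𝕜) (n : ℕ) :
    iteratedDeriv n (fun t ↦ P.eval t) = fun t ↦ (Polynomial.derivative^[n] P).eval t := by
  induction n with
  | zero => simp
  | succ n ih =>
    ext t
    rw [iteratedDeriv_succ, ih, Function.iterate_succ_apply', Polynomial.deriv]

theorem iterate_derivative_natDegree_of_monic {R : Type*} [Semiring R] {P : Polynomial R}
    (hP : P.Monic) :
    Polynomial.derivative^[P.natDegree] P = Polynomial.C (P.natDegree.factorial : R) := by
  have hdeg : (Polynomial.derivative^[P.natDegree] P).natDegree = 0 := by
    simpa using Polynomial.natDegree_iterate_derivative P P.natDegree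
  rw [Polynomial.eq_C_of_natDegree_eq_zero hdeg, Polynomial.coeff_iterate_derivative]
  simp [Nat.descFactorial_self, hP.coeff_natDegree]

theorem exists_iteratedDeriv_eq_zero_of_strictMono {n : ℕ} {h : ℝ → ℝ} (hh : ContDiff ℝ n h)
    {x : Fin (n + 1) → ℝ} (hx : StrictMono x) (hx0 : ∀ i, h (x i) = 0) :
    ∃ ξ, iteratedDeriv n h ξ = 0 := by
  induction n generalizing h with
  | zero => exact ⟨x 0, by simpa using hx0 0⟩
  | succ n ih =>
    have rolle (i : Fin (n + 1)) : ∃ ξ ∈ Set.Ioo (x i.castSucc) (x i.succ), deriv h ξ = 0 :=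
      exists_deriv_eq_zero (hx i.castSucc_lt_succ) hh.continuous.continuousOn (by rw [hx0, hx0])
    choose ξ hξ hξ0 using rolle
    have hξmono : StrictMono ξ := Fin.strictMono_iff_lt_succ.2 fun i ↦
      (hξ i.castSucc).2.trans (by simpa using (hξ i.succ).1)
    rw [iteratedDeriv_succ']
    exact ih ((contDiff_succ_iff_deriv (n := n)).1 (mod_cast hh)).2.2 hξmono hξ0

theorem exists_iteratedDeriv_eq_zero_of_card_eq {n : ℕ} {h : ℝ → ℝ} (hh : ContDiff ℝ n h)
    {s : Finset ℝ} (hs : s.card = n + 1) (h0 : ∀ t ∈ s, h t = 0) :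
    ∃ ξ, iteratedDeriv n h ξ = 0 :=
  exists_iteratedDeriv_eq_zero_of_strictMono hh (s.orderEmbOfFin hs).strictMono
    fun i ↦ h0 _ (s.orderEmbOfFin_mem hs i)

theorem exists_sub_eval_interpolate_eq {g : ℝ → ℝ} (s : Finset ℝ) (hg : ContDiff ℝ s.card g)
    (y : ℝ) :
    ∃ ξ, g y - (Lagrange.interpolate s id g).eval y =
      iteratedDeriv s.card g ξ / s.card.factorial * (Lagrange.nodal s id).eval y := by
  set p := Lagrange.interpolate s id g
  set N := Lagrange.nodal s (id : ℝ → ℝ)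
  have hp (t) (ht : t ∈ s) : p.eval t = g t :=
    Lagrange.eval_interpolate_at_node g Function.injective_id.injOn ht
  have hN (t) (ht : t ∈ s) : N.eval t = 0 := Lagrange.eval_nodal_at_node (v := id) ht
  by_cases hy : y ∈ s
  · exact ⟨y, by rw [hp y hy, hN y hy, sub_self, mul_zero]⟩
  have hNy : N.eval y ≠ 0 :=
    Lagrange.eval_nodal_not_at_node fun t ht h ↦ hy (by simpa [h] using ht)
  -- With this choice of `l`, the function `g - P` also vanishes at `y`.
  set l := (g y - p.eval y) / N.eval y with hl
  set P := p + Polynomial.C l * N with hP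
  have hPc : ContDiff ℝ s.card (fun t ↦ P.eval t) := by
    simpa using P.contDiff_aeval (𝕜 := ℝ) s.card
  obtain ⟨ξ, hξ⟩ := exists_iteratedDeriv_eq_zero_of_card_eq (hg.sub hPc)
    (Finset.card_insert_of_notMem hy) (by
      rintro t ht
      obtain rfl | ht := Finset.mem_insert.1 ht
      · simp [hP, hl, hNy]
      · simp [hP, hp t ht, hN t ht])
  have hderiv : Polynomial.derivative^[s.card] P = Polynomial.C (l * s.card.factorial) := by
    have hNs : Polynomial.derivative^[s.card] N = Polynomial.C (s.card.factorial : ℝ) := by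
      simpa [N, Lagrange.natDegree_nodal] using
        iterate_derivative_natDegree_of_monic (Lagrange.nodal_monic (s := s) (v := (id : ℝ → ℝ)))
    rw [hP, iterate_map_add, Polynomial.iterate_derivative_C_mul, hNs,
      Polynomial.iterate_derivative_eq_zero_of_degree_lt
        (Lagrange.degree_interpolate_lt g Function.injective_id.injOn), zero_add, Polynomial.C_mul]
  have hgξ : iteratedDeriv s.card g ξ = l * s.card.factorial := by
    rw [iteratedDeriv_fun_sub hg.contDiffAt hPc.contDiffAt, iteratedDeriv_polynomial_eval,
      hderiv, sub_eq_zero] at hξ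
    simpa using hξ
  refine ⟨ξ, ?_⟩
  rw [hgξ, mul_div_cancel_right₀ _ (by positivity), hl, div_mul_cancel₀ _ hNy]

theorem norm_sub_sum_basis_smul_le {E : Type*} [NormedAddCommGroup E] [NormedSpace ℝ E]
    {g : ℝ → E} (s : Finset ℝ) (hg : ContDiff ℝ s.card g) {M : ℝ}
    (hM : ∀ t, ‖iteratedDeriv s.card g t‖ ≤ M) (y : ℝ) :
    ‖g y - ∑ t ∈ s, (Lagrange.basis s id t).eval y • g t‖ ≤
      M / s.card.factorial * |(Lagrange.nodal s id).eval y| := by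
  set r := g y - ∑ t ∈ s, (Lagrange.basis s id t).eval y • g t with hr
  -- A norming functional of the error reduces the claim to the real-valued function `φ ∘ g`.
  obtain ⟨φ, hφ, hφr⟩ := exists_dual_vector'' ℝ r
  obtain ⟨ξ, hξ⟩ := exists_sub_eval_interpolate_eq s (φ.contDiff.comp hg) y
  have hval : φ r = (φ ∘ g) y - (Lagrange.interpolate s id (φ ∘ g)).eval y := by
    simp [hr, Lagrange.interpolate_apply, Polynomial.eval_finsetSum, mul_comm]
  have hderiv : |iteratedDeriv s.card (φ ∘ g) ξ| ≤ M := by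
    rw [← Real.norm_eq_abs, ← norm_iteratedFDeriv_eq_norm_iteratedDeriv,
      φ.iteratedFDeriv_comp_left hg.contDiffAt le_rfl]
    calc _ ≤ ‖φ‖ * ‖iteratedFDeriv ℝ s.card g ξ‖ :=
          φ.norm_compContinuousMultilinearMap_le _
      _ ≤ 1 * M := by
          gcongr
          exact norm_iteratedFDeriv_eq_norm_iteratedDeriv.trans_le (hM ξ)
      _ = M := one_mul M
  calc ‖r‖ = |φ r| := by simp [hφr]
    _ = |iteratedDeriv s.card (φ ∘ g) ξ| / s.card.factorial * |(Lagrange.nodal s id).eval y| := by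
        rw [hval, hξ, abs_mul, abs_div, Nat.abs_cast]
    _ ≤ M / s.card.factorial * |(Lagrange.nodal s id).eval y| := by gcongr

/-- The Chebyshev nodes of order `n`, that is, the roots of the Chebyshev polynomial `T n`. -/
noncomputable def chebyshevNodes (n : ℕ) : Finset ℝ :=
  (Finset.range n).image fun k : ℕ ↦ cos ((2 * k + 1) * π / (2 * n))

theorem card_chebyshevNodes (n : ℕ) : (chebyshevNodes n).card = n := by
  have hinj := (Finset.range n).nodup_map_iff_injOn.mp (Polynomial.Chebyshev.roots_T_real_nodup n)
  rw [chebyshevNodes, Finset.card_image_of_injOn hinj, Finset.card_range]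

theorem C_leadingCoeff_T_mul_nodal_chebyshevNodes (n : ℕ) :
    Polynomial.C (Polynomial.Chebyshev.T ℝ n).leadingCoeff *
      Lagrange.nodal (chebyshevNodes n) id = Polynomial.Chebyshev.T ℝ n := by
  have hroots : (Polynomial.Chebyshev.T ℝ n).roots = (chebyshevNodes n).val :=
    Polynomial.Chebyshev.roots_T_real n
  have hcard : (Polynomial.Chebyshev.T ℝ n).roots.card =
      (Polynomial.Chebyshev.T ℝ n).natDegree := by
    rw [hroots, Finset.card_val, card_chebyshevNodes, Polynomial.Chebyshev.natDegree_T,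
      Int.natAbs_natCast]
  conv_rhs => rw [← Polynomial.C_leadingCoeff_mul_prod_multiset_X_sub_C hcard, hroots]
  rfl

theorem abs_eval_nodal_chebyshevNodes_le (n : ℕ) {y : ℝ} (hy : |y| ≤ 1) :
    |(Lagrange.nodal (chebyshevNodes n) id).eval y| ≤ 2 / 2 ^ n := by
  have hT : |(2 : ℝ) ^ (n - 1) * (Lagrange.nodal (chebyshevNodes n) id).eval y| ≤ 1 := by
    have := Polynomial.Chebyshev.abs_eval_T_real_le_one n hy
    rwa [← C_leadingCoeff_T_mul_nodal_chebyshevNodes, Polynomial.eval_mul, Polynomial.eval_C,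
      Polynomial.Chebyshev.leadingCoeff_T, Int.natAbs_natCast] at this
  have hpow : (2 : ℝ) ^ n ≤ 2 * 2 ^ (n - 1) := by
    rw [← pow_succ']
    exact pow_le_pow_right₀ one_le_two (by lia)
  rw [abs_mul, abs_of_pos (by positivity)] at hT
  rw [le_div_iff₀ (by positivity)]
  nlinarith [abs_nonneg ((Lagrange.nodal (chebyshevNodes n) id).eval y)]

theorem norm_sub_sum_basis_chebyshevNodes_smul_le {E : Type*} [NormedAddCommGroup E]
    [NormedSpace ℝ E] {n : ℕ} {g : ℝ → E} (hg : ContDiff ℝ n g) {M : ℝ}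
    (hM : ∀ t, ‖iteratedDeriv n g t‖ ≤ M) {y : ℝ} (hy : |y| ≤ 1) :
    ‖g y - ∑ t ∈ chebyshevNodes n, (Lagrange.basis (chebyshevNodes n) id t).eval y • g t‖ ≤
      2 * M / (2 ^ n * n.factorial) := by
  have hM0 : 0 ≤ M := (norm_nonneg _).trans (hM 0)
  have h := norm_sub_sum_basis_smul_le (chebyshevNodes n) (g := g) (M := M)
    (by rwa [card_chebyshevNodes]) (by rwa [card_chebyshevNodes]) y
  rw [card_chebyshevNodes] at h
  calc _ ≤ M / n.factorial * |(Lagrange.nodal (chebyshevNodes n) id).eval y| := h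
    _ ≤ M / n.factorial * (2 / 2 ^ n) := by gcongr; exact abs_eval_nodal_chebyshevNodes_le n hy
    _ = _ := by ring

theorem iteratedDeriv_cexp_mul_ofReal (z : ℂ) (n : ℕ) :
    iteratedDeriv n (fun t : ℝ ↦ Complex.exp (z * t)) =
      fun t : ℝ ↦ z ^ n * Complex.exp (z * t) := by
  induction n with
  | zero => simp
  | succ n ih =>
    ext t
    have hlin : HasDerivAt (fun t : ℝ ↦ z * t) z t := by
      simpa using Complex.ofRealCLM.hasDerivAt.const_mul z
    rw [iteratedDeriv_succ, ih, (hlin.cexp.const_mul (z ^ n)).deriv]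
    ring

theorem norm_cexp_sub_sum_basis_chebyshevNodes_le (n : ℕ) (a : ℝ) {y : ℝ} (hy : |y| ≤ 1) :
    ‖Complex.exp (Complex.I * a * y) - ∑ t ∈ chebyshevNodes n,
        (Lagrange.basis (chebyshevNodes n) id t).eval y • Complex.exp (Complex.I * a * t)‖ ≤
      2 * (|a| / 2) ^ n / n.factorial := by
  have hderiv (t : ℝ) :
      ‖iteratedDeriv n (fun t : ℝ ↦ Complex.exp (Complex.I * a * t)) t‖ ≤ |a| ^ n := by
    simp [iteratedDeriv_cexp_mul_ofReal, Complex.norm_exp]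
  have hsmooth : ContDiff ℝ n (fun t : ℝ ↦ Complex.exp (Complex.I * a * t)) :=
    (contDiff_const.mul Complex.ofRealCLM.contDiff).cexp
  convert norm_sub_sum_basis_chebyshevNodes_smul_le hsmooth hderiv hy using 1
  rw [div_pow]
  field_simp

theorem norm_eigenvalue_le_of_finrank_lt {𝕜 E F ι : Type*} [RCLike 𝕜] [NormedAddCommGroup E]
    [InnerProductSpace 𝕜 E] [AddCommGroup F] [Module 𝕜 F] [FiniteDimensional 𝕜 F] [Fintype ι]
    {T : E →ₗ[𝕜] E} {v : ι → E} (hv : Orthonormal 𝕜 v) {μ : ι → 𝕜}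
    (hT : ∀ i, T (v i) = μ i • v i) {i₀ : ι} (hμ : ∀ i, ‖μ i₀‖ ≤ ‖μ i‖)
    (L : E →ₗ[𝕜] F) (hL : Module.finrank 𝕜 F < Fintype.card ι)
    {C : ℝ} (hC : ∀ f, L f = 0 → ‖T f‖ ≤ C * ‖f‖) : ‖μ i₀‖ ≤ C := by
  classical
  obtain ⟨a, ha, ha0⟩ : ∃ a ∈ LinearMap.ker (L ∘ₗ Fintype.linearCombination 𝕜 v), a ≠ 0 :=
    Submodule.exists_mem_ne_zero_of_ne_bot <|
      LinearMap.ker_ne_bot_of_finrank_lt (by simpa using hL)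
  set f := Fintype.linearCombination 𝕜 v a with hf
  rw [Fintype.linearCombination_apply] at hf
  have hf0 : 0 < ‖f‖ := norm_pos_iff.2 fun h ↦
    ha0 (funext (Fintype.linearIndependent_iff.1 hv.linearIndependent a (hf ▸ h)))
  have hTf : T f = ∑ i, (a i * μ i) • v i := by simp [hf, hT, smul_smul]
  have pythagoras (b : ι → 𝕜) : ‖∑ i, b i • v i‖ ^ 2 = ∑ i, ‖b i‖ ^ 2 := by
    simpa using hv.orthogonalFamily.norm_sum b Finset.univ
  have hlower : ‖μ i₀‖ * ‖f‖ ≤ ‖T f‖ := by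
    refine le_of_sq_le_sq ?_ (norm_nonneg _)
    rw [mul_pow, hTf, hf, pythagoras, pythagoras, Finset.mul_sum]
    refine Finset.sum_le_sum fun i _ ↦ ?_
    rw [norm_mul, mul_pow, mul_comm]
    gcongr
    exact hμ i
  exact le_of_mul_le_mul_right (hlower.trans (hC f ha)) hf0

theorem integral_norm_mul_norm_le {α E F : Type*} {m : MeasurableSpace α}
    {ν : Measure α} [NormedAddCommGroup E] [NormedAddCommGroup F] {g : α → E} (hg : MemLp g 2 ν)
    (f : Lp F 2 ν) : ∫ x, ‖g x‖ * ‖f x‖ ∂ν ≤ √(∫ x, ‖g x‖ ^ 2 ∂ν) * ‖f‖ := by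
  have hnorm : ‖f‖ = (∫ x, ‖f x‖ ^ (2 : ℝ) ∂ν) ^ (1 / 2 : ℝ) := by
    rw [Lp.norm_def, (Lp.memLp f).eLpNorm_eq_integral_rpow_norm two_ne_zero ENNReal.ofNat_ne_top,
      ENNReal.toReal_ofReal (by positivity)]
    norm_num
  have := integral_mul_norm_le_Lp_mul_Lq (f := fun x ↦ ‖g x‖) (g := fun x ↦ ‖f x‖)
    Real.HolderConjugate.two_two (by simpa using hg.norm) (by simpa using (Lp.memLp f).norm)
  simpa only [norm_norm, hnorm, Real.sqrt_eq_rpow, Real.rpow_two] using this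

/-- The finite Fourier transform `x ↦ ∫ exp (i c x y) f y dν(y)` with bandwidth parameter `c`
relative to a measure `ν`; the operator `F_c^{(α)}` is the case of the Gegenbauer measure. -/
noncomputable def finiteFourier (ν : Measure ℝ) (c : ℝ) (f : ℝ → ℂ) (x : ℝ) : ℂ :=
  ∫ y, Complex.exp (Complex.I * (c * x * y)) * f y ∂ν

section FiniteFourier

variable {ν : Measure ℝ} {c : ℝ}

theorem norm_cexp_I_mul_ofReal_mul_ofReal_mul (c x y : ℝ) :
    ‖Complex.exp (Complex.I * (c * x * y))‖ = 1 := by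
  simpa [mul_comm] using Complex.norm_exp_I_mul_ofReal (c * x * y)

theorem integrable_cexp_mul {f : ℝ → ℂ} (hf : Integrable f ν) (c x : ℝ) :
    Integrable (fun y : ℝ ↦ Complex.exp (Complex.I * (c * x * y)) * f y) ν :=
  hf.bdd_mul (by fun_prop) (.of_forall fun y ↦ (norm_cexp_I_mul_ofReal_mul_ofReal_mul c x y).le)

theorem continuous_finiteFourier {f : ℝ → ℂ} (hf : Integrable f ν) :
    Continuous (finiteFourier ν c f) :=
  continuous_of_dominated (fun x ↦ (integrable_cexp_mul hf c x).aestronglyMeasurable)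
    (fun x ↦ .of_forall fun y ↦ by
      rw [norm_mul, norm_cexp_I_mul_ofReal_mul_ofReal_mul, one_mul])
    hf.norm (.of_forall fun y ↦ by fun_prop)

theorem norm_finiteFourier_le (f : ℝ → ℂ) (x : ℝ) : ‖finiteFourier ν c f x‖ ≤ ∫ y, ‖f y‖ ∂ν := by
  refine (MeasureTheory.norm_integral_le_integral_norm _).trans_eq ?_
  simp only [norm_mul, norm_cexp_I_mul_ofReal_mul_ofReal_mul, one_mul]

theorem finiteFourier_congr_ae {f g : ℝ → ℂ} (h : f =ᵐ[ν] g) :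
    finiteFourier ν c f = finiteFourier ν c g :=
  funext fun _ ↦ integral_congr_ae (h.mono fun y hy ↦ by simp only [hy])

theorem norm_finiteFourier_le_of_eq_zero_on_chebyshevNodes {n : ℕ} {f : ℝ → ℂ}
    (hf : Integrable f ν) (hfn : Integrable (fun y ↦ |y| ^ n * ‖f y‖) ν)
    (h0 : ∀ t ∈ chebyshevNodes n, finiteFourier ν c f t = 0) {x : ℝ} (hx : |x| ≤ 1) :
    ‖finiteFourier ν c f x‖ ≤ 2 * (|c| / 2) ^ n / n.factorial * ∫ y, |y| ^ n * ‖f y‖ ∂ν := by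
  set ℓ : ℝ → ℝ := fun t ↦ (Lagrange.basis (chebyshevNodes n) id t).eval x
  set K : ℝ → ℝ → ℂ := fun t y ↦ Complex.exp (Complex.I * (c * t * y))
  have hterm (t : ℝ) : Integrable (fun y ↦ ℓ t • (K t y * f y)) ν :=
    (integrable_cexp_mul hf c t).smul (ℓ t)
  have hsum : ∫ y, ∑ t ∈ chebyshevNodes n, ℓ t • (K t y * f y) ∂ν = 0 := by
    rw [integral_finsetSum _ fun t _ ↦ hterm t]
    refine Finset.sum_eq_zero fun t ht ↦ ?_
    rw [MeasureTheory.integral_smul]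
    exact smul_eq_zero_of_right _ (h0 t ht)
  have herror (y : ℝ) :
      ‖K x y - ∑ t ∈ chebyshevNodes n, ℓ t • K t y‖ ≤ 2 * (|c * y| / 2) ^ n / n.factorial := by
    have hK (t : ℝ) : K t y = Complex.exp (Complex.I * (c * y : ℝ) * t) := by
      simp only [K, Complex.ofReal_mul]
      ring_nf
    simpa only [hK] using norm_cexp_sub_sum_basis_chebyshevNodes_le n (c * y) hx
  calc ‖finiteFourier ν c f x‖
      = ‖∫ y, (K x y * f y - ∑ t ∈ chebyshevNodes n, ℓ t • (K t y * f y)) ∂ν‖ := by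
        rw [integral_sub (integrable_cexp_mul hf c x) (integrable_finsetSum _ fun t _ ↦ hterm t),
          hsum, sub_zero, finiteFourier]
    _ ≤ ∫ y, 2 * (|c| / 2) ^ n / n.factorial * (|y| ^ n * ‖f y‖) ∂ν := by
        refine norm_integral_le_of_norm_le (hfn.const_mul _) (.of_forall fun y ↦ ?_)
        simp only [← smul_mul_assoc, ← Finset.sum_mul, ← sub_mul, norm_mul]
        calc _ ≤ 2 * (|c * y| / 2) ^ n / n.factorial * ‖f y‖ := by gcongr; exact herror y
          _ = _ := by rw [abs_mul]; ring
    _ = _ := integral_const_mul _ _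

variable [IsFiniteMeasure ν]

theorem memLp_finiteFourier {f : ℝ → ℂ} (hf : Integrable f ν) :
    MemLp (finiteFourier ν c f) 2 ν :=
  .of_bound (continuous_finiteFourier hf).aestronglyMeasurable _
    (.of_forall (norm_finiteFourier_le f))

theorem integrable_coeFn_Lp_two (f : Lp ℂ 2 ν) : Integrable f ν :=
  (Lp.memLp f).integrable one_le_two

variable (ν c) in
/-- The finite Fourier transform as a linear map from `L²(ν)` to functions defined everywhere, so
that it can be evaluated at single points. -/
noncomputable def finiteFourierLinearMap : Lp ℂ 2 ν →ₗ[ℂ] ℝ → ℂ where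
  toFun f := finiteFourier ν c f
  map_add' f g := by
    ext x
    rw [finiteFourier_congr_ae (Lp.coeFn_add f g), Pi.add_apply, finiteFourier, finiteFourier,
      finiteFourier, ← integral_add (integrable_cexp_mul (integrable_coeFn_Lp_two f) c x)
        (integrable_cexp_mul (integrable_coeFn_Lp_two g) c x)]
    simp only [Pi.add_apply, mul_add]
  map_smul' a f := by
    ext x
    rw [finiteFourier_congr_ae (Lp.coeFn_smul a f), RingHom.id_apply, Pi.smul_apply, finiteFourier,
      finiteFourier, ← MeasureTheory.integral_smul]
    simp only [Pi.smul_apply, smul_eq_mul, mul_left_comm]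

variable (ν c) in
/-- The finite Fourier transform as a linear operator on `L²(ν)`. -/
noncomputable def finiteFourierL2 : Lp ℂ 2 ν →ₗ[ℂ] Lp ℂ 2 ν where
  toFun f := (memLp_finiteFourier (c := c) (integrable_coeFn_Lp_two f)).toLp
    (finiteFourierLinearMap ν c f)
  map_add' f g := by simp only [map_add]; rfl
  map_smul' a f := by simp only [map_smul]; rfl

theorem coeFn_finiteFourierL2 (f : Lp ℂ 2 ν) :
    finiteFourierL2 ν c f =ᵐ[ν] finiteFourier ν c f :=
  (memLp_finiteFourier (integrable_coeFn_Lp_two f)).coeFn_toLp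

theorem norm_finiteFourierL2_le_of_eq_zero_on_chebyshevNodes {n : ℕ}
    (hν : ∀ᵐ x ∂ν, |x| ≤ 1) (f : Lp ℂ 2 ν)
    (h0 : ∀ t ∈ chebyshevNodes n, finiteFourier ν c f t = 0) :
    ‖finiteFourierL2 ν c f‖ ≤
      2 * (|c| / 2) ^ n / n.factorial * √(ν.real Set.univ * ∫ x, x ^ (2 * n) ∂ν) * ‖f‖ := by
  have hpow : MemLp (fun x : ℝ ↦ x ^ n) 2 ν :=
    .of_bound (by fun_prop) 1 (hν.mono fun x hx ↦ by simpa using pow_le_one₀ (abs_nonneg x) hx)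
  have hint : Integrable (fun y ↦ |y| ^ n * ‖f y‖) ν := by
    simpa [Pi.mul_def] using hpow.norm.integrable_mul (Lp.memLp f).norm
  have hbound : ∀ᵐ x ∂ν, ‖finiteFourierL2 ν c f x‖ ≤
      2 * (|c| / 2) ^ n / n.factorial * (√(∫ x, x ^ (2 * n) ∂ν) * ‖f‖) := by
    filter_upwards [coeFn_finiteFourierL2 f, hν] with x hx hx1
    rw [hx]
    refine (norm_finiteFourier_le_of_eq_zero_on_chebyshevNodes
      (integrable_coeFn_Lp_two f) hint h0 hx1).trans ?_
    gcongr
    simpa only [norm_pow, Real.norm_eq_abs, ← pow_mul', (even_two_mul n).pow_abs] using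
      integral_norm_mul_norm_le hpow f
  calc _ ≤ √(ν.real Set.univ) *
        (2 * (|c| / 2) ^ n / n.factorial * (√(∫ x, x ^ (2 * n) ∂ν) * ‖f‖)) := by
        have hmass : (measureUnivNNReal ν : ℝ) = ν.real Set.univ := rfl
        simpa [Real.sqrt_eq_rpow, hmass] using Lp.norm_le_of_ae_bound (by positivity) hbound
    _ = _ := by rw [Real.sqrt_mul (by positivity)]; ring

theorem norm_eigenvalue_finiteFourierL2_le (hν : ∀ᵐ x ∂ν, |x| ≤ 1) {v : ℕ → Lp ℂ 2 ν}
    (hv : Orthonormal ℂ v) {μ : ℕ → ℂ} (hμ : ∀ n, finiteFourierL2 ν c (v n) = μ n • v n)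
    (hanti : Antitone fun n ↦ ‖μ n‖) (n : ℕ) :
    ‖μ n‖ ≤ 2 * (|c| / 2) ^ n / n.factorial * √(ν.real Set.univ * ∫ x, x ^ (2 * n) ∂ν) := by
  set L : Lp ℂ 2 ν →ₗ[ℂ] chebyshevNodes n → ℂ :=
    LinearMap.funLeft ℂ ℂ Subtype.val ∘ₗ finiteFourierLinearMap ν c
  exact norm_eigenvalue_le_of_finrank_lt (hv.comp _ Fin.val_injective) (fun i : Fin (n + 1) ↦ hμ i)
    (i₀ := Fin.last n) (fun i ↦ hanti i.is_le) L (by simp [card_chebyshevNodes])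
    fun f hf ↦ norm_finiteFourierL2_le_of_eq_zero_on_chebyshevNodes hν f
      fun t ht ↦ congrFun hf ⟨t, ht⟩

end FiniteFourier

/-- The Gegenbauer measure `(1 - y ^ 2) ^ α dy` on `[-1, 1]`. The half-open interval `(-1, 1]` is
used because it is the domain of the interval integral `∫ y in -1..1`. -/
noncomputable def gegenbauerMeasure (α : ℝ) : Measure ℝ :=
  (volume.restrict (Set.Ioc (-1) 1)).withDensity fun y ↦ ENNReal.ofReal ((1 - y ^ 2) ^ α)

theorem ae_abs_le_one_gegenbauerMeasure (α : ℝ) : ∀ᵐ x ∂gegenbauerMeasure α, |x| ≤ 1 :=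
  (withDensity_absolutelyContinuous _ _).ae_le <|
    (ae_restrict_mem measurableSet_Ioc).mono fun _ hx ↦ abs_le.2 ⟨hx.1.le, hx.2⟩

theorem integral_gegenbauerMeasure {E : Type*} [NormedAddCommGroup E] [NormedSpace ℝ E]
    (α : ℝ) (f : ℝ → E) :
    ∫ y, f y ∂gegenbauerMeasure α = ∫ y in (-1 : ℝ)..1, (1 - y ^ 2) ^ α • f y := by
  rw [gegenbauerMeasure, integral_withDensity_eq_integral_toReal_smul (by fun_prop)
    (.of_forall fun _ ↦ ENNReal.ofReal_lt_top), intervalIntegral.integral_of_le (by norm_num)]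
  refine setIntegral_congr_fun measurableSet_Ioc fun y hy ↦ ?_
  have hw : 0 ≤ 1 - y ^ 2 := by nlinarith [hy.1, hy.2]
  simp only [ENNReal.toReal_ofReal (rpow_nonneg hw α)]

section GegenbauerMeasure

variable {α : ℝ}

theorem gegenbauerMeasure_univ_le_two (hα : 0 ≤ α) : gegenbauerMeasure α Set.univ ≤ 2 := by
  rw [gegenbauerMeasure, withDensity_apply _ .univ, Measure.restrict_univ]
  calc ∫⁻ y in Set.Ioc (-1 : ℝ) 1, ENNReal.ofReal ((1 - y ^ 2) ^ α)
      ≤ ∫⁻ _ in Set.Ioc (-1 : ℝ) 1, 1 := by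
        refine setLIntegral_mono measurable_const fun y hy ↦ ENNReal.ofReal_le_one.2 ?_
        exact rpow_le_one (by nlinarith [hy.1, hy.2]) (by nlinarith [sq_nonneg y]) hα
    _ = 2 := by
        rw [setLIntegral_one, Real.volume_Ioc]
        norm_num

theorem isFiniteMeasure_gegenbauerMeasure (hα : 0 ≤ α) : IsFiniteMeasure (gegenbauerMeasure α) :=
  ⟨(gegenbauerMeasure_univ_le_two hα).trans_lt ENNReal.ofNat_lt_top⟩

theorem integral_Ioo_zero_one_eq_integral_exp_neg_smul {E : Type*} [NormedAddCommGroup E]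
    [NormedSpace ℝ E] (f : ℝ → E) :
    ∫ x in Set.Ioo 0 1, f x = ∫ s in Set.Ioi (0 : ℝ), exp (-s) • f (exp (-s)) := by
  have himage : (fun s : ℝ ↦ exp (-s)) '' Set.Ioi 0 = Set.Ioo 0 1 := by
    rw [← Set.image_image exp, Set.image_neg_Ioi, neg_zero, image_exp_Iio, exp_zero]
  rw [← himage, integral_image_eq_integral_abs_deriv_smul measurableSet_Ioi
    (fun s _ ↦ (hasDerivAt_neg s).exp.hasDerivWithinAt)
    (fun s _ t _ h ↦ neg_injective (exp_injective h))]
  simp [abs_of_pos (exp_pos _)]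

theorem one_sub_exp_neg_sq_rpow_le {s : ℝ} (hs : 0 ≤ s) (hα : 0 ≤ α) :
    (1 - exp (-s) ^ 2) ^ α ≤ 2 ^ α * s ^ α := by
  have hexp : exp (-s) ^ 2 = exp (-(2 * s)) := by rw [← exp_nat_mul]; ring_nf
  rw [← mul_rpow zero_le_two hs, hexp]
  refine rpow_le_rpow (sub_nonneg.2 (exp_le_one_iff.2 (by linarith))) ?_ hα
  linarith [one_sub_le_exp_neg (2 * s)]

theorem integral_Ioo_pow_mul_one_sub_sq_rpow_le (n : ℕ) (hα : 0 ≤ α) :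
    ∫ x in Set.Ioo (0 : ℝ) 1, x ^ (2 * n) * (1 - x ^ 2) ^ α ≤
      Gamma (α + 1) / (n + 1 / 2) ^ (α + 1) / 2 := by
  have hr : (0 : ℝ) < 2 * n + 1 := by positivity
  have hint : IntegrableOn (fun s : ℝ ↦ s ^ α * exp (-((2 * n + 1) * s))) (Set.Ioi 0) := by
    simpa only [neg_mul, rpow_one] using
      integrableOn_rpow_mul_exp_neg_mul_rpow (p := 1) (by linarith) one_pos hr
  rw [integral_Ioo_zero_one_eq_integral_exp_neg_smul]
  calc _ ≤ ∫ s in Set.Ioi (0 : ℝ), 2 ^ α * (s ^ α * exp (-((2 * n + 1) * s))) := by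
        refine integral_mono_of_nonneg (ae_restrict_of_forall_mem measurableSet_Ioi fun s hs ↦ ?_)
          (hint.const_mul _) (ae_restrict_of_forall_mem measurableSet_Ioi fun s hs ↦ ?_)
        · have : exp (-s) ^ 2 ≤ 1 :=
            pow_le_one₀ (exp_pos _).le (exp_le_one_iff.2 (neg_nonpos.2 (le_of_lt hs)))
          have := rpow_nonneg (sub_nonneg.2 this) α
          simp only [Pi.zero_apply, smul_eq_mul]
          positivity
        · have hexp : exp (-((2 * n + 1) * s)) = exp (-s) * exp (-s) ^ (2 * n) := by
            rw [← pow_succ', ← exp_nat_mul]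
            push_cast
            ring_nf
          calc exp (-s) • (exp (-s) ^ (2 * n) * (1 - exp (-s) ^ 2) ^ α)
              ≤ exp (-s) * (exp (-s) ^ (2 * n) * (2 ^ α * s ^ α)) := by
                rw [smul_eq_mul]
                gcongr
                exact one_sub_exp_neg_sq_rpow_le (le_of_lt hs) hα
            _ = 2 ^ α * (s ^ α * exp (-((2 * n + 1) * s))) := by rw [hexp]; ring
    _ = 2 ^ α * ((1 / (2 * n + 1)) ^ (α + 1) * Gamma (α + 1)) := by
        rw [MeasureTheory.integral_const_mul]
        congr 1
        simpa using integral_rpow_mul_exp_neg_mul_Ioi (a := α + 1) (by linarith) hr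
    _ = _ := by
        rw [show (n : ℝ) + 1 / 2 = (2 * n + 1) / 2 by ring, div_rpow hr.le zero_le_two,
          div_rpow zero_le_one hr.le, one_rpow, rpow_add_one two_ne_zero]
        field_simp

theorem integral_pow_gegenbauerMeasure_le (n : ℕ) (hα : 0 ≤ α) :
    ∫ x, x ^ (2 * n) ∂gegenbauerMeasure α ≤ Gamma (α + 1) / (n + 1 / 2) ^ (α + 1) := by
  set f : ℝ → ℝ := fun x ↦ x ^ (2 * n) * (1 - x ^ 2) ^ α with hf
  have hcont : Continuous f :=
    (continuous_pow _).mul (Continuous.rpow_const (by fun_prop) fun _ ↦ .inr hα)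
  have hneg : ∫ x in (-1 : ℝ)..0, f x = ∫ x in (0 : ℝ)..1, f x := by
    have := integral_comp_neg (a := 0) (b := 1) f
    simpa [hf, (even_two_mul n).neg_pow] using this.symm
  have hhalf : ∫ x in (0 : ℝ)..1, f x ≤ Gamma (α + 1) / (n + 1 / 2) ^ (α + 1) / 2 := by
    rw [intervalIntegral.integral_of_le zero_le_one, integral_Ioc_eq_integral_Ioo]
    exact integral_Ioo_pow_mul_one_sub_sq_rpow_le n hα
  calc ∫ x, x ^ (2 * n) ∂gegenbauerMeasure α = ∫ x in (-1 : ℝ)..1, f x := by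
        simp only [integral_gegenbauerMeasure, smul_eq_mul, mul_comm, hf]
    _ = (∫ x in (-1 : ℝ)..0, f x) + ∫ x in (0 : ℝ)..1, f x :=
        (integral_add_adjacent_intervals (hcont.intervalIntegrable _ _)
          (hcont.intervalIntegrable _ _)).symm
    _ ≤ Gamma (α + 1) / (n + 1 / 2) ^ (α + 1) := by linarith

theorem memLp_gegenbauerMeasure {E : Type*} [NormedAddCommGroup E] {f : ℝ → E}
    (hα : 0 ≤ α) (hf : Continuous f) : MemLp f 2 (gegenbauerMeasure α) := by
  have := isFiniteMeasure_gegenbauerMeasure hα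
  obtain ⟨M, hM⟩ := (isCompact_Icc (a := (-1 : ℝ)) (b := 1)).exists_bound_of_continuousOn
    hf.continuousOn
  exact .of_bound hf.aestronglyMeasurable M <|
    (ae_abs_le_one_gegenbauerMeasure α).mono fun x hx ↦ hM x (abs_le.1 hx)

end GegenbauerMeasure

theorem pow_div_factorial_le {x : ℝ} (hx : 0 ≤ x) {n : ℕ} (hn : n ≠ 0) :
    x ^ n / n.factorial ≤ (exp 1 * x / n) ^ n / √(2 * π * n) := by
  calc x ^ n / n.factorial ≤ x ^ n / (√(2 * π * n) * (n / exp 1) ^ n) := by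
        gcongr
        exact Stirling.le_factorial_stirling n
    _ = (exp 1 * x / n) ^ n / √(2 * π * n) := by
        rw [mul_comm, ← div_div, ← div_pow, div_div_eq_mul_div, mul_comm x]

theorem two_mul_pow_div_factorial_mul_sqrt_le {x G s : ℝ} (hx : 0 ≤ x) (hG : 0 ≤ G)
    (hs : 0 ≤ s) {n : ℕ} (hn : n ≠ 0) :
    2 * x ^ n / n.factorial * √(2 * (G / (n + 1 / 2) ^ s)) ≤
      π * √G * (exp 1 * x / n) ^ n / n ^ ((s + 1) / 2) := by
  have hn0 : (0 : ℝ) < n := by positivity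
  have hsqrt : √(2 * (G / (n + 1 / 2) ^ s)) ≤ √2 * √G / √(n ^ s) := by
    rw [← sqrt_mul zero_le_two, ← sqrt_div (by positivity), mul_div_assoc]
    gcongr
    linarith
  have hpow : √(n : ℝ) * √(n ^ s) = n ^ ((s + 1) / 2) := by
    rw [← sqrt_mul hn0.le, mul_comm, ← rpow_add_one hn0.ne', sqrt_eq_rpow, ← rpow_mul hn0.le]
    ring_nf
  have hpi : 2 / √π ≤ π := by
    have hsqrtpi : 1 ≤ √π := one_le_sqrt.2 (by linarith [pi_gt_three])
    exact (div_le_self zero_le_two hsqrtpi).trans two_le_pi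
  calc 2 * x ^ n / n.factorial * √(2 * (G / (n + 1 / 2) ^ s))
      ≤ 2 * ((exp 1 * x / n) ^ n / √(2 * π * n)) * (√2 * √G / √(n ^ s)) := by
        rw [mul_div_assoc]
        exact mul_le_mul (mul_le_mul_of_nonneg_left (pow_div_factorial_le hx hn) zero_le_two)
          hsqrt (sqrt_nonneg _) (by positivity)
    _ = 2 / √π * √G * (exp 1 * x / n) ^ n / n ^ ((s + 1) / 2) := by
        rw [← hpow, sqrt_mul (by positivity), sqrt_mul zero_le_two]
        field_simp
    _ ≤ π * √G * (exp 1 * x / n) ^ n / n ^ ((s + 1) / 2) := by gcongr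

theorem div_rpow_le_mul_rpow_div_log {c a K m : ℝ} (hc : 0 < c) (hK : 0 ≤ K)
    (hm : exp 1 * c < 2 * m) (n : ℕ) :
    K * (exp 1 * c / (2 * m)) ^ n / m ^ a ≤
      (2 / exp 1) ^ a * K / (c ^ a * log (2 * m / (exp 1 * c))) *
        (exp 1 * c / (2 * m)) ^ (n + (a - 1)) := by
  have hec : 0 < exp 1 * c := by positivity
  have hm0 : 0 < m := by linarith
  set q := exp 1 * c / (2 * m) with hq
  have hq0 : 0 < q := by positivity
  have hqinv : 2 * m / (exp 1 * c) = q⁻¹ := by rw [hq, inv_div]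
  have hlog : 0 < log q⁻¹ := log_pos (by rwa [← hqinv, one_lt_div hec])
  have hbase : m ^ a = c ^ a / (2 / exp 1) ^ a / q ^ a := by
    rw [← div_rpow (by positivity) (by positivity), ← div_rpow (by positivity) hq0.le, hq]
    congr 1
    field_simp
  rw [hqinv]
  calc K * q ^ n / m ^ a = (2 / exp 1) ^ a * K / (c ^ a * q⁻¹) * q ^ (n + (a - 1)) := by
        rw [hbase, ← add_sub_assoc, rpow_sub_one hq0.ne', rpow_add hq0, rpow_natCast]
        field_simp
    _ ≤ (2 / exp 1) ^ a * K / (c ^ a * log q⁻¹) * q ^ (n + (a - 1)) := by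
        gcongr
        exact log_le_self (inv_pos.2 hq0).le

theorem orthonormal_toLp {X ι 𝕜 : Type*} {m : MeasurableSpace X} [RCLike 𝕜] [DecidableEq ι]
    {ν : Measure X} {ψ : ι → X → 𝕜} (hψ : ∀ i, MemLp (ψ i) 2 ν)
    (horth : ∀ i j, ∫ x, ψ i x * starRingEnd 𝕜 (ψ j x) ∂ν = if i = j then 1 else 0) :
    Orthonormal 𝕜 fun i ↦ (hψ i).toLp (ψ i) := by
  refine orthonormal_iff_ite.2 fun i j ↦ ?_
  rw [L2.inner_def]
  refine (MeasureTheory.integral_congr_ae ?_).trans ((horth j i).trans (if_congr eq_comm rfl rfl))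
  filter_upwards [(hψ i).coeFn_toLp, (hψ j).coeFn_toLp] with x hi hj
  rw [RCLike.inner_apply, hi, hj]

theorem finiteFourierL2_toLp_eq_smul {ν : Measure ℝ} [IsFiniteMeasure ν] {c : ℝ} {f : ℝ → ℂ}
    (hf : MemLp f 2 ν) {z : ℂ} (h : finiteFourier ν c f =ᵐ[ν] fun x ↦ z * f x) :
    finiteFourierL2 ν c (hf.toLp f) = z • hf.toLp f := by
  refine Lp.ext ((coeFn_finiteFourierL2 _).trans ?_)
  rw [finiteFourier_congr_ae hf.coeFn_toLp]
  filter_upwards [h, Lp.coeFn_smul z (hf.toLp f), hf.coeFn_toLp] with x hx hsmul hcoe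
  rw [hx, hsmul, Pi.smul_apply, hcoe, smul_eq_mul]

theorem two_mul_pow_div_factorial_mul_sqrt_gegenbauerMeasure_le {c α : ℝ} (hc : 0 ≤ c)
    (hα : 0 ≤ α) {n : ℕ} (hn : n ≠ 0) :
    2 * (c / 2) ^ n / n.factorial * √((gegenbauerMeasure α).real Set.univ *
        ∫ x, x ^ (2 * n) ∂gegenbauerMeasure α) ≤
      π * √(Gamma (α + 1)) * (exp 1 * c / (2 * (n - 1 / 2))) ^ n /
        (n - 1 / 2 : ℝ) ^ (1 + α / 2) := by
  have hmass : (gegenbauerMeasure α).real Set.univ ≤ 2 :=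
    ENNReal.toReal_le_of_le_ofReal zero_le_two
      (by simpa using gegenbauerMeasure_univ_le_two hα)
  have hmoment : 0 ≤ ∫ x, x ^ (2 * n) ∂gegenbauerMeasure α :=
    integral_nonneg fun x ↦ (even_two_mul n).pow_nonneg x
  have hm : (0 : ℝ) < n - 1 / 2 := by
    have : (1 : ℝ) ≤ n := by exact_mod_cast Nat.one_le_iff_ne_zero.2 hn
    linarith
  calc _ ≤ 2 * (c / 2) ^ n / n.factorial * √(2 * (Gamma (α + 1) / (n + 1 / 2) ^ (α + 1))) := by
        gcongr
        exact integral_pow_gegenbauerMeasure_le n hα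
    _ ≤ π * √(Gamma (α + 1)) * (exp 1 * (c / 2) / n) ^ n / n ^ ((α + 1 + 1) / 2) :=
        two_mul_pow_div_factorial_mul_sqrt_le (by positivity)
          (Gamma_pos_of_pos (by linarith)).le (by linarith) hn
    _ = π * √(Gamma (α + 1)) * (exp 1 * c / (2 * n)) ^ n / n ^ (1 + α / 2) := by
        ring_nf
    _ ≤ _ := by
        gcongr <;> linarith

theorem mu_decay_general (c α : ℝ) (hc : 0 < c) (hα : 0 ≤ α) (ψ : ℕ → ℝ → ℂ) (μ : ℕ → ℂ)
    (hψ : ∀ n, MemLp (ψ n) 2 (gegenbauerMeasure α))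
    (heig : ∀ n, finiteFourier (gegenbauerMeasure α) c (ψ n) =ᵐ[gegenbauerMeasure α]
      fun x ↦ μ n * ψ n x)
    (horth : ∀ m n, ∫ y, ψ m y * (starRingEnd ℂ) (ψ n y) ∂gegenbauerMeasure α =
      if m = n then 1 else 0)
    (hanti : Antitone fun n ↦ ‖μ n‖) (n : ℕ) (hn : (exp 1 * c + 1) / 2 < n) :
    ‖μ n‖ ≤ (2 / exp 1) ^ (1 + α / 2) * π * √(Gamma (α + 1)) /
      (c ^ (α / 2 + 1) * log ((2 * n - 1) / (exp 1 * c))) *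
        (exp 1 * c / (2 * n - 1)) ^ (n + α / 2) := by
  have := isFiniteMeasure_gegenbauerMeasure hα
  have hn0 : n ≠ 0 := by
    rintro rfl
    have := mul_pos (exp_pos 1) hc
    norm_num at hn
    linarith
  calc ‖μ n‖ ≤ 2 * (c / 2) ^ n / n.factorial * √((gegenbauerMeasure α).real Set.univ *
        ∫ x, x ^ (2 * n) ∂gegenbauerMeasure α) := by
        simpa only [abs_of_pos hc] using norm_eigenvalue_finiteFourierL2_le
          (ae_abs_le_one_gegenbauerMeasure α) (orthonormal_toLp hψ horth)
          (fun k ↦ finiteFourierL2_toLp_eq_smul (hψ k) (heig k)) hanti n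
    _ ≤ π * √(Gamma (α + 1)) * (exp 1 * c / (2 * (n - 1 / 2))) ^ n /
        (n - 1 / 2 : ℝ) ^ (1 + α / 2) :=
        two_mul_pow_div_factorial_mul_sqrt_gegenbauerMeasure_le hc.le hα hn0
    _ ≤ _ := div_rpow_le_mul_rpow_div_log hc (by positivity) (by linarith) n
    _ = _ := by ring_nf

/-- Decay of the eigenvalues of the weighted finite Fourier transform
`F_c^{(α)} f(x) = ∫_{-1}^1 e^{icxy} f(y)(1-y²)^α dy` on `L²([-1,1],(1-y²)^α dy)`.
The `(ψ n, μ n)` are hypothesized to be a complete orthonormal system of continuous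
eigenfunctions of `F_c^{(α)}`, with eigenvalues arranged in decreasing modulus; then for
every integer `n > (ec+1)/2`,
`|μ_n| ≤ (k_α/(c^{α/2+1} log((2n-1)/(ec)))) (ec/(2n-1))^{n+α/2}`,
where `k_α = (2/e)^{1+α/2} π √Γ(α+1)`. -/
theorem mu_decay (c α : ℝ) (hc : 0 < c) (hα : 0 ≤ α)
    (ψ : ℕ → ℝ → ℂ) (μ : ℕ → ℂ)
    (hcont : ∀ n, Continuous (ψ n))
    (heig : ∀ n, ∀ x : ℝ,
      (∫ y in (-1 : ℝ)..1, Complex.exp (Complex.I * (c * x * y)) * ψ n y *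
          (((1 - y ^ 2) ^ α : ℝ) : ℂ)) = μ n * ψ n x)
    (horth : ∀ m n, (∫ y in (-1 : ℝ)..1, ψ m y * (starRingEnd ℂ) (ψ n y) *
        (((1 - y ^ 2) ^ α : ℝ) : ℂ)) = if m = n then 1 else 0)
    (hdec : ∀ n, ‖μ (n + 1)‖ ≤ ‖μ n‖)
    (hcomplete : ∀ f : ℝ → ℂ, Continuous f →
      (∀ n, (∫ y in (-1 : ℝ)..1, f y * (starRingEnd ℂ) (ψ n y) *
          (((1 - y ^ 2) ^ α : ℝ) : ℂ)) = 0) → ∀ x ∈ Set.Icc (-1 : ℝ) 1, f x = 0) :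
    ∀ n : ℕ, (Real.exp 1 * c + 1) / 2 < (n : ℝ) →
      ‖μ n‖ ≤ (2 / Real.exp 1) ^ (1 + α / 2) * π * Real.sqrt (Real.Gamma (α + 1)) /
          (c ^ (α / 2 + 1) * Real.log ((2 * (n : ℝ) - 1) / (Real.exp 1 * c))) *
          (Real.exp 1 * c / (2 * (n : ℝ) - 1)) ^ ((n : ℝ) + α / 2) := by
  have hweight (f : ℝ → ℂ) : ∫ y, f y ∂gegenbauerMeasure α =
      ∫ y in (-1 : ℝ)..1, f y * (((1 - y ^ 2) ^ α : ℝ) : ℂ) := by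
    simp only [integral_gegenbauerMeasure, Complex.real_smul, mul_comm]
  exact mu_decay_general c α hc hα ψ μ (fun n ↦ memLp_gegenbauerMeasure hα (hcont n))
    (fun n ↦ .of_forall fun x ↦ (hweight _).trans (heig n x))
    (fun m n ↦ (hweight _).trans (horth m n)) (antitone_nat_of_succ_le hdec)
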